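/- Let i ≥ 1 and nonnegative integers a_1,…,a_i be given, let L = 1, and set K = (i−1) + Σ_{j=1}^{i} a_j + 1. Then the optimal broadcast rate R*_2 of the (a_i,…,a_1)_1-bar-ICP equals exactly K. -/

import Mathlib

open Finset

/-- `<m>_n`: the unique element of `{1,…,n}` congruent to `m` modulo `n`. -/
def angMod (m : ℤ) (n : ℕ) : ℕ :=
  if m % (n : ℤ) = 0 then n else (m % (n : ℤ)).toNat

/-- Message indices of the bar-ICP: pairs in `[K] × [i]`. -/
abbrev Msg (K i : ℕ) : Type :=
  {p : ℕ × ℕ // p.1 ∈ Finset.Icc 1 K ∧ p.2 ∈ Finset.Icc 1 i}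

/-- Users of the bar-ICP: elements of `[K]`. -/
abbrev User (K : ℕ) : Type := {k : ℕ // k ∈ Finset.Icc 1 K}

/-- The side-information index set `K_k` of user `k` in the
`(a_i,…,a_1)_L`-bar-ICP, as a set of pairs `(b,t)`. -/
def knownIdx (K i L : ℕ) (a : ℕ → ℕ) (k : ℕ) : Set (ℕ × ℕ) :=
  {p | ∃ t ∈ Finset.Icc 1 i, ∃ v ∈ Finset.Icc 1 (i - 1), ∃ r ∈ Finset.Icc 1 L,
    p.2 = t ∧
    p.1 = angMod ((k : ℤ) + (∑ j ∈ Finset.Icc 1 v, (a (angMod ((i : ℤ) + (t : ℤ) - (j : ℤ)) i) : ℤ))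
        + ((v : ℤ) - 1) * (L : ℤ) + (r : ℤ)) K}

/-- Want set of user `u` in the bar-ICP: the messages `(u,t)`, `t ∈ [i]`. -/
def barWant (K i : ℕ) (u : User K) : Set (Msg K i) :=
  {p | p.1.1 = u.1}

/-- Known set of user `u` in the bar-ICP. -/
def barKnown (K i L : ℕ) (a : ℕ → ℕ) (u : User K) : Set (Msg K i) :=
  {p | p.1 ∈ knownIdx K i L a u.1}

/-- A valid index code of length `ℓ` for message length `t` for the index coding
problem with message index set `I`, users `U`, want sets `W` and known sets `Kn`. -/
def ValidCode {I U : Type} (W Kn : U → Set I) (t ℓ : ℕ) : Prop :=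
  ∃ E : (I → Fin t → Bool) → Fin ℓ → Bool,
  ∃ D : ∀ u : U, (Fin ℓ → Bool) → (↥(Kn u) → Fin t → Bool) → (↥(W u) → Fin t → Bool),
    ∀ x : I → Fin t → Bool, ∀ u : U,
      D u (E x) (fun m => x m.1) = fun m => x m.1

/-- The optimal broadcast rate of an index coding problem. -/
noncomputable def optRate {I U : Type} (W Kn : U → Set I) : ℝ :=
  sInf {ρ : ℝ | ∃ t ℓ : ℕ, 1 ≤ t ∧ ValidCode W Kn t ℓ ∧ ρ = (ℓ : ℝ) / (t : ℝ)}

/-!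
Two general bounds on the broadcast rate are combined. A family of cliques (sets of messages all
but one of which are known to each user demanding that one) gives a scalar code, one parity bit per
clique. Conversely, if the messages of a set can be ordered so that each of them is demanded by a
user knowing only earlier ones, then the code word determines all of them once the remaining
messages are fixed to `0`.

In the bar-ICP, let `q t` be the `t`-th partial sum of the cyclic sequence of gaps `a_j + L`. The
sets `{(<c + q t>_K, t) : t ∈ [i]}`, `c ∈ [K]`, are cliques covering everything, so `R* ≤ K`. The
messages `(b, t)` with `K - a_t ≤ b ≤ K` are ordered by decreasing `b`, because user `k` knows
`(<k + o>_K, t)` only for offsets `0 < o < K - a_t`; so `R* ≥ ∑ a_j + i`, which is `K` when `L = 1`.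
-/

section IndexCoding

variable {I U : Type} {W Kn : U → Set I} {t ℓ : ℕ}

theorem validCode_iff : ValidCode W Kn t ℓ ↔
    ∃ E : (I → Fin t → Bool) → Fin ℓ → Bool,
      ∀ u x y, E x = E y → Set.EqOn x y (Kn u) → Set.EqOn x y (W u) := by
  constructor
  · rintro ⟨E, D, hD⟩
    refine ⟨E, fun u x y hE hKn m hm => ?_⟩
    have hside : (fun m : Kn u => x m.1) = fun m : Kn u => y m.1 :=
      funext fun m => hKn m.2
    have hx := hD x u
    rw [hE, hside, hD y u] at hx
    exact congrFun hx.symm ⟨m, hm⟩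
  · rintro ⟨E, hE⟩
    have hfactor (u : U) : Function.FactorsThrough (W u).domRestrict
        (fun x : I → Fin t → Bool => (E x, (Kn u).domRestrict x)) := fun x y hxy =>
      Set.domRestrict_eq_domRestrict_iff.2 <| hE u x y (congrArg Prod.fst hxy) <|
        Set.domRestrict_eq_domRestrict_iff.1 (congrArg Prod.snd hxy)
    exact ⟨E, fun u e s => Function.extend (fun x => (E x, (Kn u).domRestrict x)) (W u).domRestrict
      (fun _ _ _ => false) (e, s), fun x u => (hfactor u).extend_apply _ x⟩

/-- The family `C` is a clique cover of an index coding problem: every user finds each demanded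
message in some `C c` all of whose other members it knows. -/
def IsCliqueCover (W Kn : U → Set I) {ι : Type} (C : ι → Finset I) : Prop :=
  ∀ u, ∀ m ∈ W u, ∃ c, m ∈ C c ∧ ∀ m' ∈ C c, m' ≠ m → m' ∈ Kn u

theorem isCliqueCover_singleton : IsCliqueCover W Kn (fun m : I => {m}) := fun _ m _ =>
  ⟨m, mem_singleton_self m, fun _ hm' hne => absurd (mem_singleton.1 hm') hne⟩

theorem IsCliqueCover.validCode {ι : Type} [Fintype ι] {C : ι → Finset I}
    (hC : IsCliqueCover W Kn C) : ValidCode W Kn 1 (Fintype.card ι) := by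
  classical
  let bit : Bool ≃ ZMod 2 := finTwoEquiv.symm
  let parity (x : I → Fin 1 → Bool) (c : ι) : ZMod 2 := ∑ m ∈ C c, bit (x m 0)
  refine validCode_iff.2 ⟨fun x n => bit.symm (parity x ((Fintype.equivFin ι).symm n)),
    fun u x y hE hKn m hm => ?_⟩
  obtain ⟨c, hmc, hknown⟩ := hC u m hm
  have hparity : parity x c = parity y c := by
    simpa using congrFun hE (Fintype.equivFin ι c)
  have hrest : ∑ m' ∈ (C c).erase m, bit (x m' 0) = ∑ m' ∈ (C c).erase m, bit (y m' 0) :=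
    sum_congr rfl fun m' hm' => by
      rw [hKn (hknown m' (mem_of_mem_erase hm') (ne_of_mem_erase hm'))]
  simp only [parity, ← add_sum_erase _ _ hmc, hrest, add_left_inj] at hparity
  funext j
  rw [Subsingleton.elim j 0]
  exact bit.injective hparity

/-- The set `J` of messages is acyclic: it can be ranked so that each of its messages is demanded by
some user who knows only lower-ranked messages of `J`. This is acyclicity of the side-information
graph induced on `J`, with the topological order as witness. -/
def IsAcyclicSet (W Kn : U → Set I) (J : Finset I) : Prop :=
  ∃ rank : I → ℕ, ∀ m ∈ J, ∃ u, m ∈ W u ∧ ∀ m' ∈ J, m' ∈ Kn u → rank m' < rank m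

theorem IsAcyclicSet.eq_of_encode_eq {J : Finset I} (hJ : IsAcyclicSet W Kn J)
    {E : (I → Fin t → Bool) → Fin ℓ → Bool}
    (hdecode : ∀ u x y, E x = E y → Set.EqOn x y (Kn u) → Set.EqOn x y (W u))
    {x y : I → Fin t → Bool} (hE : E x = E y) (hxy : ∀ m ∉ J, x m = y m) : x = y := by
  obtain ⟨rank, hrank⟩ := hJ
  have hrank_lt (n : ℕ) : ∀ m ∈ J, rank m < n → x m = y m := by
    induction n with
    | zero => exact fun m _ hm => absurd hm (Nat.not_lt_zero _)
    | succ n ih =>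
      intro m hm hmn
      obtain ⟨u, hmu, hlt⟩ := hrank m hm
      refine hdecode u x y hE (fun m' hm' => ?_) hmu
      by_cases hm'J : m' ∈ J
      · exact ih m' hm'J ((hlt m' hm'J hm').trans_le (Nat.le_of_lt_succ hmn))
      · exact hxy m' hm'J
  funext m
  by_cases hm : m ∈ J
  · exact hrank_lt _ m hm (Nat.lt_succ_self _)
  · exact hxy m hm

theorem IsAcyclicSet.card_mul_le {J : Finset I} (hJ : IsAcyclicSet W Kn J)
    (hcode : ValidCode W Kn t ℓ) : #J * t ≤ ℓ := by
  classical
  obtain ⟨E, hdecode⟩ := validCode_iff.1 hcode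
  let extend (y : J → Fin t → Bool) (m : I) : Fin t → Bool :=
    if hm : m ∈ J then y ⟨m, hm⟩ else fun _ => false
  have hinj : Function.Injective fun y => E (extend y) := by
    intro y z hE
    have heq : extend y = extend z :=
      hJ.eq_of_encode_eq hdecode hE fun m hm => by simp only [extend, dif_neg hm]
    funext ⟨m, hm⟩
    simpa only [extend, dif_pos hm] using congrFun heq m
  have hcard := Fintype.card_le_of_injective _ hinj
  simp only [Fintype.card_fun, Fintype.card_fin, Fintype.card_bool, Fintype.card_coe,
    ← pow_mul] at hcard
  rw [mul_comm]
  exact (Nat.pow_le_pow_iff_right one_lt_two).1 hcard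

theorem IsCliqueCover.optRate_le {ι : Type} [Fintype ι] {C : ι → Finset I}
    (hC : IsCliqueCover W Kn C) : optRate W Kn ≤ Fintype.card ι := by
  refine csInf_le ⟨0, ?_⟩ ⟨1, Fintype.card ι, le_rfl, hC.validCode, by simp⟩
  rintro _ ⟨t, ℓ, -, -, rfl⟩
  positivity

theorem IsAcyclicSet.card_le_optRate [Finite I] {J : Finset I} (hJ : IsAcyclicSet W Kn J) :
    (#J : ℝ) ≤ optRate W Kn := by
  have := Fintype.ofFinite I
  refine le_csInf ⟨_, 1, _, le_rfl, isCliqueCover_singleton.validCode, rfl⟩ ?_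
  rintro _ ⟨t, ℓ, ht, hcode, rfl⟩
  rw [le_div_iff₀ (by exact_mod_cast ht)]
  exact_mod_cast hJ.card_mul_le hcode

end IndexCoding

section CyclicResidue

variable {n : ℕ}

theorem angMod_mem_Icc (hn : 0 < n) (m : ℤ) : angMod m n ∈ Icc 1 n := by
  have hnonneg := Int.emod_nonneg m (b := n) (by omega)
  have hlt := Int.emod_lt_of_pos m (b := n) (by omega)
  unfold angMod
  split_ifs <;> simp only [mem_Icc] <;> omega

theorem angMod_modEq (hn : 0 < n) (m : ℤ) : angMod m n ≡ m [ZMOD n] := by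
  unfold angMod
  split_ifs with h
  · simp [Int.ModEq, h]
  · rw [Int.toNat_of_nonneg (Int.emod_nonneg m (by omega))]
    exact Int.mod_modEq m n

theorem angMod_congr {m m' : ℤ} (h : m ≡ m' [ZMOD n]) : angMod m n = angMod m' n := by
  unfold angMod
  rw [h.eq]

theorem eq_of_modEq_of_mem_Icc {b c : ℕ} (hb : b ∈ Icc 1 n) (hc : c ∈ Icc 1 n)
    (h : (b : ℤ) ≡ c [ZMOD n]) : b = c := by
  simp only [mem_Icc] at hb hc
  exact (Int.natCast_modEq_iff.1 h).eq_of_abs_lt (abs_sub_lt_iff.2 (by omega))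

theorem eq_angMod_of_modEq {b : ℕ} {m : ℤ} (hb : b ∈ Icc 1 n) (h : b ≡ m [ZMOD n]) :
    b = angMod m n := by
  have hn : 0 < n := Nat.lt_of_lt_of_le (mem_Icc.1 hb).1 (mem_Icc.1 hb).2
  exact eq_of_modEq_of_mem_Icc hb (angMod_mem_Icc hn m) (h.trans (angMod_modEq hn m).symm)

theorem angMod_natCast {b : ℕ} (hb : b ∈ Icc 1 n) : angMod b n = b :=
  (eq_angMod_of_modEq hb rfl).symm

end CyclicResidue

section GapSum

variable (i L : ℕ) (a : ℕ → ℕ)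

/-- Partial sums of the `i`-periodic sequence of gaps `a_j + L`, started at `j = 0`, which stands
for `j = i`. The side information of the bar-ICP is expressed by differences of these sums. -/
def gapSum (i L : ℕ) (a : ℕ → ℕ) (n : ℕ) : ℕ :=
  ∑ j ∈ range n, (a (angMod j i) + L)

theorem gapSum_succ (n : ℕ) :
    gapSum i L a (n + 1) = gapSum i L a n + (a (angMod n i) + L) :=
  sum_range_succ _ _

theorem gapSum_mono : Monotone (gapSum i L a) :=
  monotone_nat_of_le_succ fun n => (Nat.le_add_right _ _).trans_eq (gapSum_succ i L a n).symm

theorem gapSum_add_gap_le {m n : ℕ} (hmn : m < n) :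
    gapSum i L a m + (a (angMod m i) + L) ≤ gapSum i L a n :=
  (gapSum_succ i L a m).symm.trans_le (gapSum_mono i L a (Nat.succ_le_of_lt hmn))

theorem gapSum_add_period (n : ℕ) :
    gapSum i L a (i + n) = gapSum i L a n + gapSum i L a i := by
  induction n with
  | zero => simp [gapSum]
  | succ n ih =>
    have hperiod : angMod (i + n : ℕ) i = angMod n i := angMod_congr (by simp [Int.ModEq])
    rw [← add_assoc, gapSum_succ, ih, gapSum_succ, hperiod]
    ring

theorem gapSum_self : gapSum i L a i = ∑ j ∈ Icc 1 i, a j + i * L := by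
  have hshift : gapSum i L a (i + 1) = gapSum i L a 1 + ∑ j ∈ Icc 1 i, (a (angMod j i) + L) := by
    unfold gapSum
    rw [← sum_range_add_sum_Ico _ (Nat.le_add_left 1 i), Ico_add_one_right_eq_Icc]
  have hsum : ∑ j ∈ Icc 1 i, (a (angMod j i) + L) = ∑ j ∈ Icc 1 i, a j + i * L := by
    rw [sum_congr rfl fun j hj => congrArg (a · + L) (angMod_natCast hj), sum_add_distrib]
    simp
  have := gapSum_add_period i L a 1
  omega

theorem gapSum_add_period_add_one {K : ℕ} (hi : 1 ≤ i)
    (hK : K = (i - 1) * L + ∑ j ∈ Icc 1 i, a j + 1) (n : ℕ) :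
    gapSum i L a (i + n) + 1 = gapSum i L a n + K + L := by
  have hmul : (i - 1) * L + L = i * L := by
    rw [← Nat.succ_mul, Nat.succ_eq_add_one, Nat.sub_add_cancel hi]
  rw [gapSum_add_period, gapSum_self]
  omega

theorem gapSum_sub_gapSum (n : ℕ) {v : ℕ} (hv : v ≤ n) :
    (gapSum i L a n : ℤ) - gapSum i L a (n - v) =
      ∑ j ∈ Icc 1 v, (a (angMod ((n : ℤ) - j) i) : ℤ) + v * L := by
  induction v with
  | zero => simp
  | succ v ih =>
    have hlast := gapSum_succ i L a (n - (v + 1))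
    rw [show n - (v + 1) + 1 = n - v by omega, Nat.cast_sub hv] at hlast
    have hprev := ih (by omega)
    rw [sum_Icc_succ_top (by omega)]
    rw [hlast] at hprev
    push_cast at hprev ⊢
    linarith

end GapSum

section BarICP

variable {i L K : ℕ} {a : ℕ → ℕ}

instance (K i : ℕ) : Fintype (Msg K i) :=
  Fintype.subtype (Icc 1 K ×ˢ Icc 1 i) fun _ => mem_product

theorem mem_knownIdx_iff {k b t : ℕ} :
    (b, t) ∈ knownIdx K i L a k ↔ t ∈ Icc 1 i ∧ ∃ n ∈ Ioo t (i + t), ∃ r ∈ Icc 1 L,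
      b = angMod (k + gapSum i L a (i + t) - gapSum i L a n - L + r) K := by
  have hoffset {v : ℕ} (hv : v ≤ i + t) (r : ℕ) :
      (k : ℤ) + gapSum i L a (i + t) - gapSum i L a (i + t - v) - L + r =
        k + ∑ j ∈ Icc 1 v, (a (angMod ((i : ℤ) + t - j) i) : ℤ) + ((v : ℤ) - 1) * L + r := by
    have h := gapSum_sub_gapSum i L a (i + t) hv
    push_cast at h
    linarith
  constructor
  · rintro ⟨_, ht, v, hv, r, hr, rfl, hb⟩
    simp only [mem_Icc] at hv
    exact ⟨ht, i + t - v, by simp only [mem_Ioo]; omega, r, hr,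
      by rw [hoffset (by omega)]; exact hb⟩
  · rintro ⟨ht, n, hn, r, hr, hb⟩
    simp only [mem_Ioo] at hn
    refine ⟨t, ht, i + t - n, by simp only [mem_Icc]; omega, r, hr, rfl, ?_⟩
    rw [← hoffset (by omega), Nat.sub_sub_self hn.2.le]
    exact hb

theorem mem_knownIdx_of_modEq (hL : 1 ≤ L) (hK : K = (i - 1) * L + ∑ j ∈ Icc 1 i, a j + 1)
    {k b s t : ℕ} (hb : b ∈ Icc 1 K) (hs : s ∈ Icc 1 i) (ht : t ∈ Icc 1 i) (hst : s ≠ t)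
    (h : b ≡ k + gapSum i L a s - gapSum i L a t [ZMOD K]) :
    (b, s) ∈ knownIdx K i L a k := by
  have hs' := mem_Icc.1 hs
  have ht' := mem_Icc.1 ht
  have hi : 1 ≤ i := hs'.1.trans hs'.2
  have hperiod_s := gapSum_add_period_add_one i L a hi hK s
  have hperiod_t := gapSum_add_period_add_one i L a hi hK t
  refine mem_knownIdx_iff.2 ⟨hs, ?_⟩
  -- If `s < t`, the negative offset `gapSum s - gapSum t` becomes one of `K_k` after adding `K`,
  -- with `r = 1`; otherwise it is one as it stands, with `r = L`.
  rcases hst.lt_or_gt with hlt | hgt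
  · refine ⟨t, by simp only [mem_Ioo]; omega, 1, by simp only [mem_Icc]; omega,
      eq_angMod_of_modEq hb (h.trans (Int.modEq_iff_dvd.2 ⟨1, ?_⟩))⟩
    push_cast
    omega
  · refine ⟨i + t, by simp only [mem_Ioo]; omega, L, by simp only [mem_Icc]; omega,
      eq_angMod_of_modEq hb (h.trans (Int.modEq_iff_dvd.2 ⟨0, ?_⟩))⟩
    omega

/-- The clique `{(<c + gapSum t>_K, t) : t ∈ [i]}` of the bar-ICP, given by a congruence on its
members. -/
def barClique (K i L : ℕ) (a : ℕ → ℕ) (c : User K) : Finset (Msg K i) :=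
  {m | (m.1.1 : ℤ) ≡ c.1 + gapSum i L a m.1.2 [ZMOD K]}

theorem isCliqueCover_barClique (hL : 1 ≤ L) (hK : K = (i - 1) * L + ∑ j ∈ Icc 1 i, a j + 1) :
    IsCliqueCover (barWant K i) (barKnown K i L a) (barClique K i L a) := by
  rintro ⟨_, _⟩ ⟨⟨k, t⟩, hk, ht⟩ rfl
  have hK0 : 0 < K := by omega
  set c := angMod ((k : ℤ) - gapSum i L a t) K
  have hc : c + gapSum i L a t ≡ k [ZMOD K] := by
    simpa using (angMod_modEq hK0 ((k : ℤ) - gapSum i L a t)).add_right (gapSum i L a t : ℤ)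
  refine ⟨⟨c, angMod_mem_Icc hK0 _⟩, by simpa [barClique] using hc.symm, ?_⟩
  rintro ⟨⟨b, s⟩, hb', hs⟩ hmem hne
  have hmod : (b : ℤ) ≡ c + gapSum i L a s [ZMOD K] := by simpa [barClique] using hmem
  refine mem_knownIdx_of_modEq hL hK hb' hs ht (fun hst => hne ?_) ?_
  · subst hst
    obtain rfl := eq_of_modEq_of_mem_Icc hb' hk (hmod.trans hc)
    rfl
  · calc (b : ℤ) ≡ c + gapSum i L a s [ZMOD K] := hmod
      _ = c + gapSum i L a t + (gapSum i L a s - gapSum i L a t) := by ring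
      _ ≡ k + (gapSum i L a s - gapSum i L a t) [ZMOD K] := hc.add_right _
      _ = k + gapSum i L a s - gapSum i L a t := by ring

theorem lt_of_mem_knownIdx (hK : K = (i - 1) * L + ∑ j ∈ Icc 1 i, a j + 1) {k b t : ℕ}
    (hk : k ≤ K) (h : (b, t) ∈ knownIdx K i L a k) (hb : K ≤ b + a t) : k < b := by
  obtain ⟨ht, n, hn, r, hr, hbmod⟩ := mem_knownIdx_iff.1 h
  have ht' := mem_Icc.1 ht
  simp only [mem_Ioo, mem_Icc] at hn hr
  have hperiod := gapSum_add_period_add_one i L a (ht'.1.trans ht'.2) hK t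
  have hlower : gapSum i L a t + (a t + L) ≤ gapSum i L a n := by
    simpa only [angMod_natCast ht] using gapSum_add_gap_le i L a hn.1
  have hupper := gapSum_add_gap_le i L a hn.2
  have hK0 : 0 < K := by omega
  set position : ℤ := k + gapSum i L a (i + t) - gapSum i L a n - L + r
  have hdvd : (K : ℤ) ∣ position - b := hbmod ▸ (angMod_modEq hK0 position).dvd
  by_contra! hle
  have hpos : 0 < position - b := by omega
  have hlt : position - b < K := by omega
  exact (Int.le_of_dvd hpos hdvd).not_gt hlt

/-- The messages `(b, t)` of the bar-ICP with `K - a_t ≤ b ≤ K`, an acyclic set. -/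
def barTail (K i : ℕ) (a : ℕ → ℕ) : Finset (Msg K i) :=
  {m | K ≤ m.1.1 + a m.1.2}

theorem isAcyclicSet_barTail (hK : K = (i - 1) * L + ∑ j ∈ Icc 1 i, a j + 1) :
    IsAcyclicSet (barWant K i) (barKnown K i L a) (barTail K i a) := by
  refine ⟨fun m => K - m.1.1, fun m _ => ⟨⟨m.1.1, m.2.1⟩, rfl, fun m' hm' hknown => ?_⟩⟩
  have hlt := lt_of_mem_knownIdx hK (mem_Icc.1 m.2.1).2 hknown (by simpa [barTail] using hm')
  exact Nat.sub_lt_sub_left (hlt.trans_le (mem_Icc.1 m'.2.1).2) hlt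

theorem card_barTail (ha : ∀ t ∈ Icc 1 i, a t < K) :
    #(barTail K i a) = ∑ j ∈ Icc 1 i, a j + i := by
  have hfiber : ∀ t ∈ Icc 1 i, #{b ∈ Icc 1 K | K ≤ b + a t} = a t + 1 := fun t ht => by
    have htK := ha t ht
    have hIcc : {b ∈ Icc 1 K | K ≤ b + a t} = Icc (K - a t) K := by
      ext b
      simp only [mem_filter, mem_Icc]
      omega
    rw [hIcc, Nat.card_Icc]
    omega
  calc #(barTail K i a)
      = #{p ∈ Icc 1 K ×ˢ Icc 1 i | K ≤ p.1 + a p.2} := by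
        rw [← card_map (.subtype _)]
        congr 1
        ext ⟨b, t⟩
        simp [barTail, and_comm]
    _ = ∑ t ∈ Icc 1 i, #{b ∈ Icc 1 K | K ≤ b + a t} := by
        simp_rw [card_filter, sum_product_right]
    _ = ∑ j ∈ Icc 1 i, a j + i := by
        rw [sum_congr rfl hfiber, sum_add_distrib]
        simp

end BarICP

theorem stmt4_general (i L : ℕ) (hL : 1 ≤ L) (a : ℕ → ℕ)
    (K : ℕ) (hK : K = (i - 1) * L + (∑ j ∈ Icc 1 i, a j) + 1) :
    optRate (barWant K i) (barKnown K i L a) ∈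
      Set.Icc ((∑ j ∈ Icc 1 i, a j + i : ℕ) : ℝ) (K : ℝ) := by
  have ha : ∀ t ∈ Icc 1 i, a t < K := fun t ht => by
    have := single_le_sum_of_canonicallyOrdered (f := a) ht
    omega
  constructor
  · simpa only [card_barTail ha] using (isAcyclicSet_barTail hK).card_le_optRate
  · simpa using (isCliqueCover_barClique hL hK).optRate_le

/-- second part of Corollary 4 of the paper: the optimal broadcast
rate of the `(a_i,…,a_1)_1`-bar-ICP (i.e. `L = 1`) equals exactly `K`. -/
theorem stmt4 (i : ℕ) (hi : 1 ≤ i) (a : ℕ → ℕ)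
    (K : ℕ) (hK : K = (i - 1) * 1 + (∑ j ∈ Finset.Icc 1 i, a j) + 1) :
    optRate (barWant K i) (barKnown K i 1 a) = (K : ℝ) := by
  have h := stmt4_general i 1 le_rfl a K hK
  rw [show ∑ j ∈ Icc 1 i, a j + i = K by omega] at h
  exact le_antisymm h.2 h.1
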